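/- arXiv:0806.2375 — 3 statements merged into one kernel-verified Lean document; each statement's English description precedes it below -/
import Mathlib

section
/- The 16×16 integer matrix G given in the paper for DIH6(16) (block form [[2A, A],[A, 2A]] where A is the E8 Cartan-type Gram data; explicitly the matrix with diagonal 4 on the first 8 rows paired as listed) is positive definite and is the Gram matrix of a lattice isometric to A2 ⊗ E8; its Smith normal form has invariant factors 1,1,1,1,1,1,1,1,3,3,3,3,3,3,3,3. -/
open Matrix Kronecker

/-- A Gram matrix for the `A2` root lattice. -/
def A2Gram : Matrix (Fin 2) (Fin 2) ℤ := !![2, -1; -1, 2]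

/-- A Gram matrix for the `E8` root lattice. -/
def E8Gram : Matrix (Fin 8) (Fin 8) ℤ :=
  !![ 2,-1, 0, 0, 0, 0, 0, 0;
     -1, 2,-1, 0, 0, 0, 0, 0;
      0,-1, 2,-1, 0, 0, 0,-1;
      0, 0,-1, 2,-1, 0, 0, 0;
      0, 0, 0,-1, 2,-1, 0, 0;
      0, 0, 0, 0,-1, 2,-1, 0;
      0, 0, 0, 0, 0,-1, 2, 0;
      0, 0,-1, 0, 0, 0, 0, 2]

/-- The 16×16 block matrix `[[2B, B], [B, 2B]]` with `B` the `E8` Gram matrix, the Gram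
matrix of the lattice `DIH6(16)` from the paper. -/
def DIH6_16Gram : Matrix (Fin 8 ⊕ Fin 8) (Fin 8 ⊕ Fin 8) ℤ :=
  Matrix.fromBlocks (2 • E8Gram) E8Gram E8Gram (2 • E8Gram)

def E8Inv : Matrix (Fin 8) (Fin 8) ℤ :=
  !![4, 7, 10, 8, 6, 4, 2, 5;
     7, 14, 20, 16, 12, 8, 4, 10;
     10, 20, 30, 24, 18, 12, 6, 15;
     8, 16, 24, 20, 15, 10, 5, 12;
     6, 12, 18, 15, 12, 8, 4, 9;
     4, 8, 12, 10, 8, 6, 3, 6;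
     2, 4, 6, 5, 4, 3, 2, 3;
     5, 10, 15, 12, 9, 6, 3, 8]

lemma E8_mul_inv : E8Gram * E8Inv = 1 := by decide +kernel

lemma E8q (x : Fin 8 → ℝ) : x ⬝ᵥ ((E8Gram.map (Int.cast : ℤ → ℝ)) *ᵥ x) =
    2*(x 0-x 1/2)^2 + 3/2*(x 1-2/3* x 2)^2 + 2*(x 7-x 2/2)^2 + 2*(x 6-x 5/2)^2
      +3/2*(x 5-2/3*x 4)^2+4/3*(x 4-3/4*x 3)^2+5/4*(x 3-4/5*x 2)^2+1/30* (x 2)^2 := by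
  simp [E8Gram, dotProduct, mulVec, Fin.sum_univ_eight]
  ring

lemma E8q_nonneg (x : Fin 8 → ℝ) : 0 ≤ x ⬝ᵥ ((E8Gram.map (Int.cast : ℤ → ℝ)) *ᵥ x) := by
  rw [E8q]; positivity

lemma E8q_zero (x : Fin 8 → ℝ) (h : x ⬝ᵥ ((E8Gram.map (Int.cast : ℤ → ℝ)) *ᵥ x) ≤ 0) :
    x = 0 := by
  rw [E8q] at h
  have key : ∀ t : ℝ, t ^ 2 ≤ 0 → t = 0 := fun t ht => by
    have := sq_nonneg t
    exact pow_eq_zero_iff (two_ne_zero) |>.1 (le_antisymm ht this)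
  have n1 := sq_nonneg (x 0-x 1/2)
  have n2 := sq_nonneg (x 1-2/3* x 2)
  have n3 := sq_nonneg (x 7-x 2/2)
  have n4 := sq_nonneg (x 6-x 5/2)
  have n5 := sq_nonneg (x 5-2/3*x 4)
  have n6 := sq_nonneg (x 4-3/4*x 3)
  have n7 := sq_nonneg (x 3-4/5*x 2)
  have n8 := sq_nonneg (x 2)
  have e1 := key (x 0-x 1/2) (by linarith)
  have e2 := key (x 1-2/3* x 2) (by linarith)
  have e3 := key (x 7-x 2/2) (by linarith)
  have e4 := key (x 6-x 5/2) (by linarith)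
  have e5 := key (x 5-2/3*x 4) (by linarith)
  have e6 := key (x 4-3/4*x 3) (by linarith)
  have e7 := key (x 3-4/5*x 2) (by linarith)
  have e8 := key (x 2) (by linarith)
  ext i
  fin_cases i <;> simp <;> linarith

lemma Gq (x : Fin 8 ⊕ Fin 8 → ℝ) : x ⬝ᵥ ((DIH6_16Gram.map (Int.cast : ℤ → ℝ)) *ᵥ x) =
    (x ∘ Sum.inl) ⬝ᵥ ((E8Gram.map (Int.cast : ℤ → ℝ)) *ᵥ (x ∘ Sum.inl)) +
    (x ∘ Sum.inr) ⬝ᵥ ((E8Gram.map (Int.cast : ℤ → ℝ)) *ᵥ (x ∘ Sum.inr)) +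
    (x ∘ Sum.inl + x ∘ Sum.inr) ⬝ᵥ ((E8Gram.map (Int.cast : ℤ → ℝ)) *ᵥ
      (x ∘ Sum.inl + x ∘ Sum.inr)) := by
  have h2 : (2 • E8Gram).map (Int.cast : ℤ → ℝ) = (2:ℝ) • E8Gram.map (Int.cast : ℤ → ℝ) := by
    ext i j; simp only [Matrix.map_apply, Matrix.smul_apply]; simp
  obtain ⟨u, v, rfl⟩ : ∃ u v : Fin 8 → ℝ, x = Sum.elim u v :=
    ⟨x ∘ Sum.inl, x ∘ Sum.inr, by simp⟩
  rw [DIH6_16Gram, fromBlocks_map, h2, fromBlocks_mulVec, sumElim_dotProduct_sumElim]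
  simp only [Sum.elim_comp_inl, Sum.elim_comp_inr, mulVec_add, add_dotProduct, dotProduct_add,
    smul_mulVec, dotProduct_smul, smul_eq_mul]
  ring

lemma G_posDef : (DIH6_16Gram.map (Int.cast : ℤ → ℝ)).PosDef := by
  refine Matrix.PosDef.of_dotProduct_mulVec_pos ?_ ?_
  · have h : DIH6_16Gramᵀ = DIH6_16Gram := by decide +kernel
    rw [IsHermitian, conjTranspose_eq_transpose_of_trivial, ← transpose_map, h]
  · intro x hx
    rw [star_trivial, Gq]
    have a := E8q_nonneg (x ∘ Sum.inl)
    have b := E8q_nonneg (x ∘ Sum.inr)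
    have c := E8q_nonneg (x ∘ Sum.inl + x ∘ Sum.inr)
    by_contra! hc
    have ha := E8q_zero (x ∘ Sum.inl) (by linarith)
    have hb := E8q_zero (x ∘ Sum.inr) (by linarith)
    apply hx
    ext i
    rcases i with i | i
    · exact congrFun ha i
    · exact congrFun hb i

lemma smith : fromBlocks 1 (-1) (-1) 2 * DIH6_16Gram * fromBlocks E8Inv E8Inv 0 E8Inv =
    Matrix.diagonal (Sum.elim (fun _ : Fin 8 => (1 : ℤ)) (fun _ : Fin 8 => (3 : ℤ))) := by
  decide +kernel

lemma detU : (fromBlocks 1 (-1) (-1) 2 : Matrix (Fin 8 ⊕ Fin 8) (Fin 8 ⊕ Fin 8) ℤ).det = 1 := by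
  rw [det_fromBlocks_one₁₁]
  have : (2 - (-1) * (-1) : Matrix (Fin 8) (Fin 8) ℤ) = 1 := by decide +kernel
  rw [this, det_one]

lemma detC : E8Inv.det * E8Inv.det = 1 := by
  have h := congrArg Matrix.det E8_mul_inv
  rw [det_mul, det_one, mul_comm] at h
  have := Int.isUnit_iff.1 (IsUnit.of_mul_eq_one _ h)
  rcases this with h | h <;> rw [h] <;> norm_num

lemma detW : (fromBlocks E8Inv E8Inv 0 E8Inv).det = 1 := by
  rw [det_fromBlocks_zero₂₁, detC]

/-- The 16×16 matrix `[[2B, B], [B, 2B]]` (with `B` the `E8` Gram matrix)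
is positive definite, has determinant `3^8`, is the Gram matrix of a lattice isometric
to `A2 ⊗ E8` (i.e. is unimodularly congruent to the Gram matrix of `A2 ⊗ E8`), and its
Smith normal form has invariant factors eight `1`s and eight `3`s. -/
theorem DIH6_16_is_A2E8 :
    (DIH6_16Gram.map (Int.cast : ℤ → ℝ)).PosDef ∧
    DIH6_16Gram.det = 3 ^ 8 ∧
    (∃ P : Matrix (Fin 8 ⊕ Fin 8) (Fin 8 ⊕ Fin 8) ℤ, IsUnit P.det ∧
      DIH6_16Gram = Pᵀ *
        (Matrix.reindex ((finProdFinEquiv.trans (finCongr (by norm_num : 2*8 = 8+8))).trans finSumFinEquiv.symm)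
          ((finProdFinEquiv.trans (finCongr (by norm_num : 2*8 = 8+8))).trans finSumFinEquiv.symm) (A2Gram ⊗ₖ E8Gram)) * P) ∧
    (∃ U W : Matrix (Fin 8 ⊕ Fin 8) (Fin 8 ⊕ Fin 8) ℤ, IsUnit U.det ∧ IsUnit W.det ∧
      U * DIH6_16Gram * W =
        Matrix.diagonal (Sum.elim (fun _ => (1 : ℤ)) (fun _ => (3 : ℤ)))) := by
  refine ⟨G_posDef, ?_, ?_, ?_⟩
  · have h := congrArg Matrix.det smith
    rw [det_mul, det_mul, detU, detW, one_mul, mul_one] at h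
    rw [h, det_diagonal, Fintype.prod_sum_type]
    simp
  · refine ⟨fromBlocks 1 0 0 (-1), ?_, ?_⟩
    · rw [det_fromBlocks_zero₂₁, det_neg]
      simp
    · decide +kernel
  · exact ⟨_, _, by rw [detU]; exact isUnit_one, by rw [detW]; exact isUnit_one, smith⟩
end

section
/- The 14×14 Gram matrix given in the paper for DIH6(12) is positive definite, even, and the corresponding lattice is rootless with Smith invariants 1,1,1,1,1,1,1,1,1,3,3,3,6,6 (so determinant 3³·6² = 972). -/
open Matrix

/-- The 14×14 Gram matrix of the lattice `DIH6(12)` from the paper, with respect to the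
basis `γ1, γ2, γ3, …, γ8, γ3ξ, …, γ8ξ`. -/
def DIH6_12Gram : Matrix (Fin 14) (Fin 14) ℤ :=
  !![ 4,-2, 0, 0, 0, 0, 0, 0, 0, 0, 0, 0, 0, 0;
     -2, 4,-2, 0, 0, 0,-2, 0,-2, 0, 0, 0, 2, 0;
      0,-2, 4,-2, 0, 0, 0, 0, 0, 1, 0, 0,-2, 0;
      0, 0,-2, 4,-2, 0, 0, 0, 1,-2, 1, 0, 0, 0;
      0, 0, 0,-2, 4,-2, 0, 0, 0, 1,-2, 1, 0, 0;
      0, 0, 0, 0,-2, 4, 0, 0, 0, 0, 1,-2, 0, 0;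
      0,-2, 0, 0, 0, 0, 4,-2, 2, 0, 0, 0, 0, 1;
      0, 0, 0, 0, 0, 0,-2, 4, 0, 0, 0, 0,-1,-2;
      0,-2, 0, 1, 0, 0, 2, 0, 4,-2, 0, 0, 0, 0;
      0, 0, 1,-2, 1, 0, 0, 0,-2, 4,-2, 0, 0, 0;
      0, 0, 0, 1,-2, 1, 0, 0, 0,-2, 4,-2, 0, 0;
      0, 0, 0, 0, 1,-2, 0, 0, 0, 0,-2, 4, 0, 0;
      0, 2,-2, 0, 0, 0, 0,-1, 0, 0, 0, 0, 4, 2;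
      0, 0, 0, 0, 0, 0, 1,-2, 0, 0, 0, 0, 2, 4]

def cR : Matrix (Fin 14) (Fin 14) ℤ :=
  !![2,-1,0,0,0,0,0,0,0,0,0,0,0,0;
    0,3,-2,0,0,0,-2,0,-2,0,0,0,2,0;
    0,0,8,-6,0,0,-4,0,-4,3,0,0,-2,0;
    0,0,0,10,-8,0,-4,0,0,-5,4,0,-2,0;
    0,0,0,0,12,-10,-4,0,0,0,-6,5,-2,0;
    0,0,0,0,0,14,-4,0,0,0,0,-7,-2,0;
    0,0,0,0,0,0,8,-14,0,0,0,0,4,7;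
    0,0,0,0,0,0,0,2,0,0,0,0,0,-1;
    0,0,0,0,0,0,0,0,4,-3,0,0,2,0;
    0,0,0,0,0,0,0,0,0,5,-4,0,2,0;
    0,0,0,0,0,0,0,0,0,0,6,-5,2,0;
    0,0,0,0,0,0,0,0,0,0,0,7,2,0;
    0,0,0,0,0,0,0,0,0,0,0,0,4,7;
    0,0,0,0,0,0,0,0,0,0,0,0,0,1]

def cP : Matrix (Fin 14) (Fin 14) ℤ :=
  !![0,0,1,0,0,0,0,0,0,0,0,0,0,0;
    0,0,2,1,0,0,0,0,0,0,0,0,0,0;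
    0,0,-1,0,1,0,0,0,0,0,0,0,0,0;
    0,0,-4,-2,0,0,1,0,0,0,0,0,0,0;
    1,0,-2,0,2,1,0,0,0,0,0,0,0,0;
    12,-8,-32,-8,16,8,-4,0,0,0,0,0,0,1;
    2,-3,-8,-2,4,2,-2,-1,0,0,0,0,0,0;
    10,15,8,12,12,6,10,5,0,1,0,0,0,0;
    -15,-31,-26,-18,-12,-6,-20,-10,-1,0,0,0,0,0;
    66,129,102,78,58,30,84,42,3,0,-1,0,0,0;
    -222,-444,-360,-266,-188,-94,-288,-144,-12,-1,2,1,0,0;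
    -357,-708,-568,-424,-304,-152,-458,-228,-20,-2,4,2,1,0;
    57,111,92,70,52,26,76,38,-2,-4,-4,-2,4,-2;
    -72,-147,-108,-78,-52,-26,-84,-42,-18,-12,-8,-4,12,-6]

def cPi : Matrix (Fin 14) (Fin 14) ℤ :=
  !![0,0,0,0,-4,0,2,-2,12,0,-2,0,-3,1;
    0,-2,0,0,-6,-2,2,32,-186,0,28,4,56,-19;
    1,0,0,0,0,0,0,0,0,0,0,0,0,0;
    -2,1,0,0,0,0,0,0,0,0,0,0,0,0;
    1,0,1,0,0,0,0,0,0,0,0,0,0,0;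
    0,0,-2,0,5,0,-2,2,-12,0,2,0,3,-1;
    0,2,0,1,0,0,0,0,0,0,0,0,0,0;
    0,0,0,-2,20,6,-7,-96,558,0,-84,-12,-168,57;
    -2,4,0,0,16,2,-10,-14,77,0,-10,-4,-29,10;
    4,-2,0,0,0,0,-3,9,-48,0,8,0,12,-4;
    -2,0,-2,0,0,0,6,-18,105,-1,-18,0,-27,9;
    0,0,4,0,-10,0,1,5,-30,2,5,0,6,-2;
    0,0,0,2,-16,-8,-2,158,-920,0,140,17,269,-91;
    0,0,0,4,-40,-15,8,264,-1536,0,232,32,460,-156]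

def cQ : Matrix (Fin 14) (Fin 14) ℤ :=
  !![0,0,0,0,0,0,0,0,-1,0,3,0,12,-9;
    0,0,0,0,2,0,-1,1,-8,0,9,0,33,-21;
    0,0,0,0,0,0,0,0,0,0,1,0,4,-4;
    0,0,0,0,0,0,0,0,1,0,0,0,0,-2;
    0,0,0,0,0,0,1,-3,18,0,-9,0,-28,8;
    0,0,0,0,0,0,0,0,0,1,0,0,-2,0;
    0,0,0,0,0,1,2,-24,140,0,-64,-6,-232,76;
    0,0,0,0,0,0,0,0,0,0,0,1,8,-4;
    0,1,0,0,7,0,-6,14,-84,0,44,0,134,-50;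
    1,0,0,0,4,0,-4,10,-58,0,30,0,90,-34;
    0,0,0,0,1,0,0,0,0,0,0,0,-2,-2;
    0,0,1,0,-2,0,0,2,-12,2,6,0,14,-6;
    0,0,0,0,0,0,-1,4,-22,0,8,0,20,-2;
    0,0,0,1,-10,-4,2,70,-408,0,186,26,742,-254]

def cQi : Matrix (Fin 14) (Fin 14) ℤ :=
  !![0,-2,4,-2,0,0,0,0,0,1,0,0,-2,0;
    0,-4,6,0,-2,0,0,0,1,0,1,0,-4,0;
    0,2,-4,0,4,-2,0,0,0,0,-2,1,2,0;
    0,6,-12,0,4,0,4,-2,0,0,-2,0,8,1;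
    4,2,-8,0,6,0,0,0,0,0,-3,0,4,0;
    64,16,-96,0,64,0,1,6,0,0,-32,0,50,0;
    14,4,-22,0,16,0,0,0,0,0,-8,0,11,0;
    10,4,-21,6,13,0,0,0,0,0,-8,0,9,0;
    2,0,-6,3,0,0,0,0,0,0,0,0,0,0;
    2,2,-2,-2,6,1,0,0,0,0,-4,0,4,0;
    0,-4,-7,8,-12,0,0,0,0,0,8,0,-8,0;
    -4,-8,-4,12,-24,0,0,1,0,0,16,0,-16,0;
    1,1,-1,-1,3,0,0,0,0,0,-2,0,2,0;
    1,0,-3,1,0,0,0,0,0,0,0,0,0,0]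

def ca : Fin 14 → ℤ := ![840,280,35,21,14,10,15,105,105,63,42,30,45,315]

def lvls : List (ℤ × ℤ × ℤ × List ℤ) :=
  [(315, 2, 1, []),
   (45, 6, 4, [7]),
   (30, 7, 7, [2, 0]),
   (42, 6, 6, [-5, 2, 0]),
   (63, 5, 5, [-4, 0, 2, 0]),
   (105, 4, 4, [-3, 0, 0, 2, 0]),
   (105, 4, 2, [0, 0, 0, 0, 0, -1]),
   (15, 10, 8, [-14, 0, 0, 0, 0, 4, 7]),
   (10, 12, 14, [-4, 0, 0, 0, 0, -7, -2, 0]),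
   (14, 10, 12, [-10, -4, 0, 0, 0, -6, 5, -2, 0]),
   (21, 8, 10, [-8, 0, -4, 0, 0, -5, 4, 0, -2, 0]),
   (35, 6, 8, [-6, 0, 0, -4, 0, -4, 3, 0, 0, -2, 0]),
   (280, 2, 3, [-2, 0, 0, 0, -2, 0, -2, 0, 0, 0, 2, 0]),
   (840, 1, 2, [-1, 0, 0, 0, 0, 0, 0, 0, 0, 0, 0, 0, 0])]

/-- Dot product of two integer lists. -/
def ldot : List ℤ → List ℤ → ℤ
  | c :: cs, x :: xs => c * x + ldot cs xs
  | _, _ => 0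

/-- `okAll n lo f`: `f` holds on `lo, lo+1, …, lo+n-1`. -/
def okAll (f : ℤ → Bool) : ℕ → ℤ → Bool
  | 0, _ => true
  | n + 1, lo => f lo && okAll f n (lo + 1)

theorem okAll_spec (f : ℤ → Bool) (n : ℕ) (lo : ℤ) (h : okAll f n lo = true) (t : ℤ)
    (h1 : lo ≤ t) (h2 : t < lo + n) : f t = true := by
  induction n generalizing lo with
  | zero => simp at h2; omega
  | succ n ih =>
    simp only [okAll, Bool.and_eq_true] at h
    rcases eq_or_lt_of_le h1 with h3 | h3
    · rw [← h3]; exact h.1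
    · exact ih (lo + 1) h.2 (by omega) (by push_cast at h2; omega)

/-- Exhaustive search: no completion of `xs` has remaining weighted sum of squares `rem`. -/
def chk (B : ℤ) : List (ℤ × ℤ × ℤ × List ℤ) → List ℤ → ℤ → Bool
  | [], _, rem => decide (rem ≠ 0)
  | (a, r, m, cs) :: rest, xs, rem =>
    decide (0 < a) && decide (0 ≤ r) && decide (0 < m) && decide (B < a * (r + 1) ^ 2) &&
    okAll (fun t =>
      let s := m * t + ldot cs xs
      let e := rem - a * s ^ 2
      if e < 0 then true else chk B rest (t :: xs) e)
      ((2 * r) / m + 2).toNat ((-r - ldot cs xs) / m)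

/-- The weighted sum of squares for the remaining coordinates. -/
def wsum : List (ℤ × ℤ × ℤ × List ℤ) → List ℤ → List ℤ → ℤ
  | (a, _, m, cs) :: rest, xs, t :: ts =>
    a * (m * t + ldot cs xs) ^ 2 + wsum rest (t :: xs) ts
  | _, _, _ => 0

theorem wsum_nonneg (l : List (ℤ × ℤ × ℤ × List ℤ)) (hp : ∀ p ∈ l, 0 < p.1) (xs ts : List ℤ) :
    0 ≤ wsum l xs ts := by
  induction l generalizing xs ts with
  | nil => simp [wsum]
  | cons p rest ih =>
    obtain ⟨a, r, m, cs⟩ := p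
    cases ts with
    | nil => simp [wsum]
    | cons t ts =>
      have h1 := ih (fun p hq => hp p (List.mem_cons_of_mem _ hq)) (t :: xs) ts
      have h2 : 0 < a := hp (a, r, m, cs) List.mem_cons_self
      simp only [wsum]
      positivity

theorem chk_spec (B : ℤ) (l : List (ℤ × ℤ × ℤ × List ℤ)) (hp : ∀ p ∈ l, 0 < p.1)
    (xs : List ℤ) (rem : ℤ)
    (hB : rem ≤ B) (h : chk B l xs rem = true) (ts : List ℤ) (hl : ts.length = l.length) :
    wsum l xs ts ≠ rem := by
  induction l generalizing xs ts rem with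
  | nil =>
    simp [chk] at h
    simp [wsum]
    exact fun h' => h h'.symm
  | cons p rest ih =>
    obtain ⟨a, r, m, cs⟩ := p
    cases ts with
    | nil => simp at hl
    | cons t ts =>
      have hp' : ∀ p ∈ rest, 0 < p.1 := fun p hq => hp p (List.mem_cons_of_mem _ hq)
      have h0 := wsum_nonneg rest hp' (t :: xs) ts
      simp only [chk, Bool.and_eq_true, decide_eq_true_eq] at h
      obtain ⟨⟨⟨⟨ha, hr⟩, hm⟩, hb⟩, hall⟩ := h
      intro heq
      simp only [wsum] at heq
      generalize hc : ldot cs xs = c at *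
      have hs : a * (m * t + c) ^ 2 ≤ B := by linarith
      have hs2 : (m * t + c) ^ 2 < (r + 1) ^ 2 := by
        by_contra hcon
        push Not at hcon
        nlinarith
      have hs3 := abs_lt_of_sq_lt_sq hs2 (by omega)
      rw [abs_lt] at hs3
      have e0 := Int.mul_ediv_add_emod (-r - c) m
      have e1 := Int.emod_nonneg (-r - c) hm.ne'
      have e2 := Int.emod_lt_of_pos (-r - c) hm
      have f0 := Int.mul_ediv_add_emod (2 * r) m
      have f2 := Int.emod_lt_of_pos (2 * r) hm
      have f3 : 0 ≤ 2 * r / m := Int.ediv_nonneg (by omega) hm.le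
      have hlo : (-r - c) / m ≤ t := by
        by_contra hcon
        push Not at hcon
        nlinarith
      have hhi : t < (-r - c) / m + (((2 * r) / m + 2).toNat : ℕ) := by
        rw [Int.toNat_of_nonneg (by omega)]
        by_contra hcon
        push Not at hcon
        nlinarith
      have hx := okAll_spec _ _ _ hall t hlo hhi
      rw [if_neg (by linarith)] at hx
      have hsq : 0 ≤ a * (m * t + c) ^ 2 := by positivity
      exact ih hp' (t :: xs) _ (by linarith) hx ts (by simpa using hl) (by linarith)

theorem lvls_chk : chk 1680 lvls [] 1680 = true := by decide +kernel

/-- Upper half of the Gram matrix. -/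
def cK : Matrix (Fin 14) (Fin 14) ℤ :=
  Matrix.of fun i j => if i < j then DIH6_12Gram i j else if i = j then 2 else 0

theorem cK_eq : DIH6_12Gram = cK + cKᵀ := by decide +kernel

theorem cR_eq : (840 : ℤ) • DIH6_12Gram = cRᵀ * Matrix.diagonal ca * cR := by decide +kernel

theorem cP_mul : cP * cPi = 1 := by decide +kernel

theorem cQ_mul : cQ * cQi = 1 := by decide +kernel

theorem smith_eq : cP * DIH6_12Gram * cQ = Matrix.diagonal
    (fun i : Fin 14 => if (i : ℕ) < 9 then (1 : ℤ) else if (i : ℕ) < 12 then 3 else 6) := by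
  decide +kernel

theorem cP_unit : IsUnit cP.det :=
  IsUnit.of_mul_eq_one cPi.det (by rw [← Matrix.det_mul, cP_mul, Matrix.det_one])

theorem cQ_unit : IsUnit cQ.det :=
  IsUnit.of_mul_eq_one cQi.det (by rw [← Matrix.det_mul, cQ_mul, Matrix.det_one])

theorem gram_even (v : Fin 14 → ℤ) : Even (v ⬝ᵥ DIH6_12Gram.mulVec v) := by
  refine ⟨v ⬝ᵥ cK.mulVec v, ?_⟩
  rw [cK_eq, Matrix.add_mulVec, dotProduct_add, Matrix.mulVec_transpose, dotProduct_comm v (v ᵥ* cK),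
    ← Matrix.dotProduct_mulVec]

theorem gram_sq (v : Fin 14 → ℤ) :
    840 * (v ⬝ᵥ DIH6_12Gram.mulVec v) = ∑ i, ca i * (cR.mulVec v i) ^ 2 := by
  have h : 840 * (v ⬝ᵥ DIH6_12Gram.mulVec v) = v ⬝ᵥ ((840 : ℤ) • DIH6_12Gram).mulVec v := by
    rw [Matrix.smul_mulVec, dotProduct_smul, smul_eq_mul]
  rw [h, cR_eq, ← Matrix.mulVec_mulVec, ← Matrix.mulVec_mulVec, Matrix.dotProduct_mulVec,
    Matrix.vecMul_transpose]
  simp only [dotProduct, Matrix.mulVec_diagonal]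
  exact Finset.sum_congr rfl fun i _ => by ring

theorem wsum_eq (v : Fin 14 → ℤ) : ∑ i, ca i * (cR.mulVec v i) ^ 2 =
    wsum lvls [] [v 13, v 12, v 11, v 10, v 9, v 8, v 7, v 6, v 5, v 4, v 3, v 2, v 1, v 0] := by
  simp [wsum, lvls, ldot, Fin.sum_univ_succ, ca, cR, Matrix.mulVec, dotProduct]
  ring

theorem gram_rootless (v : Fin 14 → ℤ) : v ⬝ᵥ DIH6_12Gram.mulVec v ≠ 2 := by
  intro h
  have h1 := gram_sq v
  rw [h, wsum_eq] at h1
  exact chk_spec 1680 lvls (by decide) [] 1680 le_rfl lvls_chk _ rfl (by rw [← h1]; norm_num)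

theorem cR_tri' : cR = Matrix.of fun i j => if j < i then 0 else cR i j := by decide +kernel

theorem cR_tri (i j : Fin 14) (h : j < i) : cR i j = 0 := by
  rw [cR_tri', Matrix.of_apply, if_pos h]

theorem cR_diag : (∏ i : Fin 14, cR i i) ≠ 0 := by decide +kernel

theorem cR_det : cR.det ≠ 0 := by
  have h : cR.IsUpperTriangular := fun i j hij => cR_tri i j hij
  rw [Matrix.det_of_isUpperTriangular h]
  exact cR_diag

theorem gram_posDef : (DIH6_12Gram.map (Int.cast : ℤ → ℝ)).PosDef := by
  have hD : (Matrix.diagonal (fun i => (ca i : ℝ))).PosDef := by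
    rw [Matrix.posDef_diagonal_iff]
    have : ∀ i, 0 < ca i := by decide
    intro i
    exact_mod_cast this i
  have hdet : (cR.map (Int.cast : ℤ → ℝ)).det ≠ 0 := by
    have : (cR.map (Int.cast : ℤ → ℝ)).det = (cR.det : ℝ) :=
      ((Int.castRingHom ℝ).map_det cR).symm
    rw [this]
    exact_mod_cast cR_det
  have hinj : Function.Injective (cR.map (Int.cast : ℤ → ℝ)).mulVec :=
    Matrix.mulVec_injective_iff_isUnit.2
      ((Matrix.isUnit_iff_isUnit_det _).2 (isUnit_iff_ne_zero.2 hdet))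
  have h := hD.conjTranspose_mul_mul_same hinj
  have he : DIH6_12Gram.map (Int.cast : ℤ → ℝ) = (840⁻¹ : ℝ) •
      ((cR.map (Int.cast : ℤ → ℝ))ᴴ * Matrix.diagonal (fun i => (ca i : ℝ)) *
        cR.map (Int.cast : ℤ → ℝ)) := by
    have h2 := congrArg (fun M : Matrix (Fin 14) (Fin 14) ℤ => M.map (Int.castRingHom ℝ)) cR_eq
    simp only [Matrix.map_mul] at h2
    rw [Matrix.diagonal_map (by simp), Matrix.transpose_map] at h2
    rw [Matrix.conjTranspose_eq_transpose_of_trivial]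
    have h3 : (cR.map (Int.cast : ℤ → ℝ))ᵀ * Matrix.diagonal (fun i => (ca i : ℝ)) *
        cR.map (Int.cast : ℤ → ℝ) = (840 : ℝ) • DIH6_12Gram.map (Int.cast : ℤ → ℝ) := by
      refine Eq.trans h2.symm ?_
      ext i j
      simp only [Matrix.map_apply, Matrix.smul_apply, smul_eq_mul, map_mul]
      norm_num
    rw [h3, smul_smul]
    norm_num
  rw [he]
  exact h.smul (by norm_num)

theorem gram_det : DIH6_12Gram.det = 972 := by
  have hpos : 0 < DIH6_12Gram.det := by
    have h1 := gram_posDef.det_pos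
    have : (DIH6_12Gram.map (Int.cast : ℤ → ℝ)).det = (DIH6_12Gram.det : ℝ) :=
      ((Int.castRingHom ℝ).map_det DIH6_12Gram).symm
    rw [this] at h1
    exact_mod_cast h1
  have h := congrArg Matrix.det smith_eq
  rw [Matrix.det_mul, Matrix.det_mul, Matrix.det_diagonal] at h
  have hd : (∏ i : Fin 14, (if (i : ℕ) < 9 then (1 : ℤ) else if (i : ℕ) < 12 then 3 else 6))
      = 972 := by decide +kernel
  rw [hd] at h
  rcases Int.isUnit_iff.1 cP_unit with h1 | h1 <;> rcases Int.isUnit_iff.1 cQ_unit with h2 | h2 <;>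
    rw [h1, h2] at h <;> omega

/-- The 14×14 Gram matrix of `DIH6(12)` is positive definite and even, the
corresponding lattice is rootless, and its Smith normal form has invariant factors
`1,1,1,1,1,1,1,1,1,3,3,3,6,6` (so the determinant is `3³·6² = 972`). -/
theorem DIH6_12_properties :
    (DIH6_12Gram.map (Int.cast : ℤ → ℝ)).PosDef ∧
    (∀ v : Fin 14 → ℤ, Even (v ⬝ᵥ DIH6_12Gram.mulVec v)) ∧
    (∀ v : Fin 14 → ℤ, v ⬝ᵥ DIH6_12Gram.mulVec v ≠ 2) ∧
    DIH6_12Gram.det = 972 ∧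
    (∃ U W : Matrix (Fin 14) (Fin 14) ℤ, IsUnit U.det ∧ IsUnit W.det ∧
      U * DIH6_12Gram * W = Matrix.diagonal
        (fun i : Fin 14 => if (i : ℕ) < 9 then (1 : ℤ) else if (i : ℕ) < 12 then 3 else 6)) := by
  exact ⟨gram_posDef, gram_even, gram_rootless, gram_det, cP, cQ, cP_unit, cQ_unit, smith_eq⟩
end

section
/- For the Barnes–Wall lattice BW16 (even lattice of rank 16, minimal norm 4, determinant 2^8): BW16 is rootless and its discriminant group is (ℤ/2ℤ)^8, matching the entry DIH8(16,0) in the classification. -/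
open Matrix

/-- The first-order Reed–Muller code `RM(1,4) ≤ 𝔽₂^16`, spanned by the all-ones word and
the four coordinate functions of `𝔽₂⁴ ≅ Fin 16`. -/
def RM14 : Submodule (ZMod 2) (Fin 16 → ZMod 2) :=
  Submodule.span (ZMod 2)
    ({fun _ => 1} ∪ Set.range fun (i : Fin 4) (j : Fin 16) =>
      if (j : ℕ).testBit (i : ℕ) then 1 else 0)

/-- Membership in (the `√2`-rescaled copy of) the Barnes–Wall lattice `BW16`, realized by
Construction B applied to `RM(1,4)`: integer vectors reducing mod 2 to a codeword of
`RM(1,4)` and with coordinate sum divisible by 4.  The `BW16` norm of such `x` is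
`(x ⬝ x)/2`. -/
def memBW16 (x : Fin 16 → ℤ) : Prop :=
  (fun j => (x j : ZMod 2)) ∈ RM14 ∧ (4 : ℤ) ∣ ∑ j, x j

/-- generators of the code, lifted to the integers -/
def bwg (i : Fin 5) (j : Fin 16) : ℤ :=
  if (i : ℕ) = 0 then 1 else if (j : ℕ).testBit ((i : ℕ) - 1) then 1 else 0

/-- an explicit upper triangular basis -/
def bwBf : Fin 16 → Fin 16 → ℤ := fun i j =>
  if i = 0 then bwg 0 j else if i = 1 then bwg 1 j else if i = 2 then bwg 2 j
  else if i = 4 then bwg 3 j else if i = 8 then bwg 4 j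
  else if i = 15 then (if j = 15 then 4 else 0)
  else if j = i then 2 else if j = 15 then -2 else 0

/-- the basis as a matrix -/
def bwB : Matrix (Fin 16) (Fin 16) ℤ := fun i j => bwBf i j

/-- four times the inverse of `bwB` -/
def bwN : Matrix (Fin 16) (Fin 16) ℤ :=
  !![4, -4, -4, 2, -4, 2, 2, 4, -4, 2, 2, 4, 2, 4, 4, 17;
     0, 4, 0, -2, 0, -2, 0, -2, 0, -2, 0, -2, 0, -2, 0, -7;
     0, 0, 4, -2, 0, 0, -2, -2, 0, 0, -2, -2, 0, 0, -2, -7;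
     0, 0, 0, 2, 0, 0, 0, 0, 0, 0, 0, 0, 0, 0, 0, 1;
     0, 0, 0, 0, 4, -2, -2, -2, 0, 0, 0, 0, -2, -2, -2, -7;
     0, 0, 0, 0, 0, 2, 0, 0, 0, 0, 0, 0, 0, 0, 0, 1;
     0, 0, 0, 0, 0, 0, 2, 0, 0, 0, 0, 0, 0, 0, 0, 1;
     0, 0, 0, 0, 0, 0, 0, 2, 0, 0, 0, 0, 0, 0, 0, 1;
     0, 0, 0, 0, 0, 0, 0, 0, 4, -2, -2, -2, -2, -2, -2, -7;
     0, 0, 0, 0, 0, 0, 0, 0, 0, 2, 0, 0, 0, 0, 0, 1;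
     0, 0, 0, 0, 0, 0, 0, 0, 0, 0, 2, 0, 0, 0, 0, 1;
     0, 0, 0, 0, 0, 0, 0, 0, 0, 0, 0, 2, 0, 0, 0, 1;
     0, 0, 0, 0, 0, 0, 0, 0, 0, 0, 0, 0, 2, 0, 0, 1;
     0, 0, 0, 0, 0, 0, 0, 0, 0, 0, 0, 0, 0, 2, 0, 1;
     0, 0, 0, 0, 0, 0, 0, 0, 0, 0, 0, 0, 0, 0, 2, 1;
     0, 0, 0, 0, 0, 0, 0, 0, 0, 0, 0, 0, 0, 0, 0, 1]

/-- twice the inverse Gram matrix -/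
def bwH : Matrix (Fin 16) (Fin 16) ℤ := fun i j => (bwNᵀ * bwN) i j / 4

def bwSel : Fin 8 → Fin 16 := ![0, 3, 5, 6, 9, 10, 12, 15]
def bwIdx : Fin 8 → Fin 16 := ![15, 12, 10, 9, 6, 5, 3, 0]
def bwK : Fin 16 → ℕ := ![1, 0, 0, 2, 0, 4, 8, 14, 0, 16, 32, 50, 64, 84, 104, 128]

/-- eight rows of `bwH` -/
def bwC : Matrix (Fin 8) (Fin 16) ℤ := fun t j => bwH (bwSel t) j
def bwKm : Matrix (Fin 16) (Fin 8) ℤ := fun i t => if (bwK i).testBit t then 1 else 0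

def bwD (j : Fin 16) : Fin 16 → ℤ := fun k =>
  (if k = j then 2 else 0) - (if k = 15 then 2 else 0)

def bwT : Matrix (Fin 16) (Fin 16) ℤ := fun j k => (2 * bwN j k - 2 * bwN 15 k) / 4

set_option maxRecDepth 100000

theorem bw_BN : bwB * bwN = (4 : ℤ) • (1 : Matrix (Fin 16) (Fin 16) ℤ) := by
  have : ∀ i j, (bwB * bwN) i j = ((4 : ℤ) • (1 : Matrix (Fin 16) (Fin 16) ℤ)) i j := by
    decide +kernel
  ext i j; exact this i j

theorem bw_NB : bwN * bwB = (4 : ℤ) • (1 : Matrix (Fin 16) (Fin 16) ℤ) := by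
  have : ∀ i j, (bwN * bwB) i j = ((4 : ℤ) • (1 : Matrix (Fin 16) (Fin 16) ℤ)) i j := by
    decide +kernel
  ext i j; exact this i j

theorem bw_NN : bwNᵀ * bwN = (4 : ℤ) • bwH := by
  have : ∀ i j, (4 : ℤ) ∣ (bwNᵀ * bwN) i j := by
    decide +kernel
  ext i j
  have := this i j
  simp only [Matrix.smul_apply, bwH, smul_eq_mul]
  omega

theorem bw_KC : ∀ i j, (2 : ℤ) ∣ bwH i j - (bwKm * bwC) i j := by
  decide +kernel

theorem bw_CR : ∀ t k : Fin 8, (bwC t (bwIdx k)) % 2 = if t = k then 1 else 0 := by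
  decide +kernel

theorem bw_T : ∀ j k, (bwT * bwB) j k = bwD j k := by
  decide +kernel

theorem bw_det : bwB.det = 2 ^ 12 := by
  have h : bwB.BlockTriangular id := by
    have : ∀ i j : Fin 16, (j < i → (bwB i j : ℤ) = 0) := by
      have : ∀ i j : Fin 16, (¬ (j < i) ∨ bwBf i j = 0) := by decide +kernel
      intro i j h
      exact (this i j).resolve_left (not_not.mpr h)
    intro i j h
    exact this i j h
  rw [Matrix.det_of_isUpperTriangular h]
  decide +kernel

theorem bw_wt : ∀ c : Fin 5 → ZMod 2,
    ((∀ j, ∑ i, c i * (bwg i j : ZMod 2) = 0) ∨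
      ∑ j, (if (∑ i, c i * (bwg i j : ZMod 2)) = 1 then (1 : ℤ) else 0) = 8 ∨
      ∑ j, (if (∑ i, c i * (bwg i j : ZMod 2)) = 1 then (1 : ℤ) else 0) = 16) := by
  decide +kernel

theorem bw_rep {v : Fin 16 → ZMod 2} (h : v ∈ RM14) :
    ∃ c : Fin 5 → ZMod 2, ∀ j, v j = ∑ i, c i * (bwg i j : ZMod 2) := by
  let A : Matrix (Fin 5) (Fin 16) (ZMod 2) := fun i j => (bwg i j : ZMod 2)
  have key : RM14 ≤ LinearMap.range A.vecMulLinear := by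
    unfold RM14
    rw [Submodule.span_le]
    have hA : ∀ i, A i ∈ LinearMap.range A.vecMulLinear := fun i =>
      ⟨Pi.single i 1, Matrix.single_one_vecMul i A⟩
    rintro x (hx | ⟨i, rfl⟩)
    · rw [Set.mem_singleton_iff] at hx
      subst hx
      exact (show A 0 = fun _ => 1 by ext j; simp [A, bwg]) ▸ hA 0
    · have e : A i.succ = fun j : Fin 16 => if (j : ℕ).testBit (i : ℕ) then 1 else 0 := by
        ext j
        simp [A, bwg]
      change (fun j : Fin 16 => if (j : ℕ).testBit (i : ℕ) then (1 : ZMod 2) else 0) ∈ LinearMap.range A.vecMulLinear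
      exact e ▸ hA i.succ
  obtain ⟨c, hc⟩ := key h
  refine ⟨c, fun j => ?_⟩
  rw [← hc]
  rfl

theorem bw_gsum : ∀ i, (4 : ℤ) ∣ ∑ j, bwg i j := by decide +kernel

theorem bw_decomp {x : Fin 16 → ℤ} (h : memBW16 x) :
    ∃ (c : Fin 5 → ℤ) (z : Fin 16 → ℤ) (m : ℤ),
      (∀ j, x j = ∑ i, c i * bwg i j + 2 * z j) ∧ ∑ j, z j = 2 * m := by
  obtain ⟨h1, h2⟩ := h
  obtain ⟨c, hc⟩ := bw_rep h1
  have : ∀ j, ∃ z : ℤ, x j = ∑ i, ((c i).val : ℤ) * bwg i j + 2 * z := by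
    intro j
    have h3 : ((x j - ∑ i, ((c i).val : ℤ) * bwg i j : ℤ) : ZMod 2) = 0 := by
      have := hc j
      push_cast
      simp only [ZMod.natCast_val, ZMod.cast_id', id]
      rw [this, sub_self]
    rw [ZMod.intCast_zmod_eq_zero_iff_dvd] at h3
    obtain ⟨z, hz⟩ := h3
    exact ⟨z, by push_cast at hz; linarith⟩
  choose z hz using this
  have hs : ∑ j, x j = ∑ i, ((c i).val : ℤ) * ∑ j, bwg i j + 2 * ∑ j, z j := by
    rw [Finset.sum_congr rfl (fun j _ => hz j), Finset.sum_add_distrib, Finset.sum_comm,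
      Finset.mul_sum]
    simp_rw [Finset.mul_sum]
  have hd : (4 : ℤ) ∣ ∑ i, ((c i).val : ℤ) * ∑ j, bwg i j :=
    Finset.dvd_sum fun i _ => Dvd.dvd.mul_left (bw_gsum i) _
  have : ∃ m, ∑ j, z j = 2 * m := ⟨(∑ j, z j) / 2, by omega⟩
  obtain ⟨m, hm⟩ := this
  exact ⟨_, z, m, hz, hm⟩

theorem bw_rows_mem : ∀ i, memBW16 (bwB i) := by
  intro i
  constructor
  · have hg : ∀ k : Fin 5, (fun j => ((bwg k j : ℤ) : ZMod 2)) ∈ RM14 := by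
      intro k
      apply Submodule.subset_span
      refine Fin.cases ?_ (fun k => ?_) k
      · left
        simp [bwg]
      · right
        refine ⟨k, ?_⟩
        ext j
        simp [bwg]
    have h0 : ∀ i, (∀ j, ((bwB i j : ℤ) : ZMod 2) = 0) ∨
        ∃ k : Fin 5, ∀ j, ((bwB i j : ℤ) : ZMod 2) = ((bwg k j : ℤ) : ZMod 2) := by
      decide +kernel
    rcases h0 i with h | ⟨k, h⟩
    · rw [show (fun j => ((bwB i j : ℤ) : ZMod 2)) = 0 from funext h]
      exact Submodule.zero_mem _
    · rw [show (fun j => ((bwB i j : ℤ) : ZMod 2)) = _ from funext h]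
      exact hg k
  · revert i
    decide +kernel

theorem bw_mem_span {x : Fin 16 → ℤ} (h : memBW16 x) :
    x ∈ Submodule.span ℤ (Set.range bwB) := by
  obtain ⟨c, z, m, hx, hm⟩ := bw_decomp h
  have hrow : ∀ i, bwB i ∈ Submodule.span ℤ (Set.range bwB) := fun i =>
    Submodule.subset_span ⟨i, rfl⟩
  have hg : ∀ k : Fin 5, bwg k ∈ Submodule.span ℤ (Set.range bwB) := by
    intro k
    have : ∀ k : Fin 5, ∃ i : Fin 16, ∀ j : Fin 16, bwBf i j = bwg k j := by decide +kernel
    obtain ⟨i, hi⟩ := this k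
    have e : bwB i = bwg k := funext hi
    exact e ▸ hrow i
  have hD : ∀ j, bwD j ∈ Submodule.span ℤ (Set.range bwB) := by
    intro j
    have : bwD j = ∑ i, bwT j i • bwB i := by
      ext k
      rw [← bw_T]
      simp [Matrix.mul_apply]
    rw [this]
    exact Submodule.sum_mem _ fun i _ => Submodule.smul_mem _ _ (hrow i)
  have : x = ∑ i, c i • bwg i + ∑ j, z j • bwD j + m • bwB 15 := by
    ext k
    have hB : bwB 15 k = if k = 15 then 4 else 0 := by
      revert k; decide +kernel
    simp only [Pi.add_apply, Finset.sum_apply, Pi.smul_apply, smul_eq_mul, hx, bwD, hB,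
      mul_sub, Finset.sum_sub_distrib, ← Finset.sum_mul, hm]
    simp only [mul_ite, mul_zero, Finset.sum_ite_eq, Finset.mem_univ, if_true]
    split_ifs <;> ring
  rw [this]
  refine Submodule.add_mem _ (Submodule.add_mem _ ?_ ?_) (Submodule.smul_mem _ _ (hrow _))
  · exact Submodule.sum_mem _ fun i _ => Submodule.smul_mem _ _ (hg i)
  · exact Submodule.sum_mem _ fun i _ => Submodule.smul_mem _ _ (hD i)

theorem bw_norm {x : Fin 16 → ℤ} (h : memBW16 x) :
    (4 : ℤ) ∣ x ⬝ᵥ x ∧ (x ≠ 0 → 8 ≤ x ⬝ᵥ x) := by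
  obtain ⟨c, hc⟩ := bw_rep h.1
  have big : ∀ w : ℤ, (8 ≤ w) → (4 ∣ w) →
      ∑ j, (if (∑ i, c i * (bwg i j : ZMod 2)) = 1 then (1 : ℤ) else 0) = w →
      (4 : ℤ) ∣ x ⬝ᵥ x ∧ (x ≠ 0 → 8 ≤ x ⬝ᵥ x) := by
    intro w hw hw4 hs
    simp_rw [← hc] at hs
    have hj : ∀ j, (4 : ℤ) ∣ x j * x j - (if ((x j : ℤ) : ZMod 2) = 1 then (1 : ℤ) else 0) ∧
        (if ((x j : ℤ) : ZMod 2) = 1 then (1 : ℤ) else 0) ≤ x j * x j := by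
      intro j
      rcases Int.even_or_odd' (x j) with ⟨k, hk | hk⟩
      · have : ((x j : ℤ) : ZMod 2) = 0 := by
          rw [ZMod.intCast_zmod_eq_zero_iff_dvd]; exact ⟨k, by simpa using hk⟩
        rw [this, hk]
        simp only [zero_ne_one, if_false]
        exact ⟨⟨k * k, by ring⟩, by nlinarith [sq_nonneg k]⟩
      · have : ((x j : ℤ) : ZMod 2) = 1 := by
          rw [hk]; push_cast
          have : (2 : ZMod 2) = 0 := by decide
          rw [this]; ring
        rw [this, hk]
        simp only [if_true]
        refine ⟨⟨k * k + k, by ring⟩, ?_⟩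
        have : 0 ≤ k * (k + 1) := by
          rcases le_or_gt 0 k with h | h
          · positivity
          · nlinarith
        nlinarith
    have h4 := Finset.dvd_sum (s := Finset.univ) fun j _ => (hj j).1
    have h8 := Finset.sum_le_sum (s := Finset.univ) fun j _ => (hj j).2
    rw [Finset.sum_sub_distrib, hs] at h4
    rw [hs] at h8
    change 4 ∣ x ⬝ᵥ x - w at h4
    change w ≤ x ⬝ᵥ x at h8
    exact ⟨by omega, fun _ => by omega⟩
  rcases bw_wt c with h0 | h8 | h16
  · have : ∀ j, ∃ z, x j = 2 * z := by
      intro j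
      have := hc j
      simp only [h0, ZMod.intCast_zmod_eq_zero_iff_dvd] at this
      obtain ⟨z, hz⟩ := this
      exact ⟨z, by simpa using hz⟩
    choose z hz using this
    have hxx : x ⬝ᵥ x = 4 * ∑ j, z j * z j := by
      simp only [dotProduct, hz, Finset.mul_sum]
      exact Finset.sum_congr rfl fun j _ => by ring
    refine ⟨⟨_, hxx⟩, fun hx => ?_⟩
    have h2 := h.2
    simp only [hz, ← Finset.mul_sum] at h2
    have h3 : (2 : ℤ) ∣ ∑ j, (z j * z j - z j) := Finset.dvd_sum fun j _ => by
      have := Int.even_mul_pred_self (z j)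
      rw [even_iff_two_dvd] at this
      convert this using 1; ring
    rw [Finset.sum_sub_distrib] at h3
    have h5 : 0 < ∑ j, z j * z j := by
      obtain ⟨j, hj⟩ := Function.ne_iff.mp hx
      have hzj : z j ≠ 0 := by
        intro h
        apply hj
        simp [hz, h]
      exact Finset.sum_pos' (fun i _ => mul_self_nonneg _)
        ⟨j, Finset.mem_univ _, mul_self_pos.mpr hzj⟩
    omega
  · exact big 8 (by norm_num) (by norm_num) h8
  · exact big 16 (by norm_num) (by norm_num) h16

theorem bw_BBH : bwB * bwBᵀ * bwH = (4 : ℤ) • 1 := by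
  have h : (4 : ℤ) • (bwB * bwBᵀ * bwH) = (4 : ℤ) • ((4 : ℤ) • 1) := by
    rw [← Matrix.mul_smul, ← bw_NN]
    calc bwB * bwBᵀ * (bwNᵀ * bwN) = bwB * (bwN * bwB)ᵀ * bwN := by
          rw [Matrix.transpose_mul]; simp only [Matrix.mul_assoc]
      _ = _ := by 
          rw [bw_NB, Matrix.transpose_smul, Matrix.transpose_one, Matrix.mul_smul,
            Matrix.mul_one, Matrix.smul_mul, bw_BN]
  exact smul_right_injective _ (by norm_num : (4 : ℤ) ≠ 0) h

theorem bw_HBB : bwH * (bwB * bwBᵀ) = (4 : ℤ) • 1 := by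
  have h : (4 : ℤ) • (bwH * (bwB * bwBᵀ)) = (4 : ℤ) • ((4 : ℤ) • 1) := by
    rw [← Matrix.smul_mul, ← bw_NN]
    calc bwNᵀ * bwN * (bwB * bwBᵀ) = bwNᵀ * (bwN * bwB) * bwBᵀ := by
          simp only [Matrix.mul_assoc]
      _ = (4 : ℤ) • (bwB * bwN)ᵀ := by 
          rw [bw_NB, Matrix.transpose_mul, Matrix.mul_smul, Matrix.mul_one, Matrix.smul_mul]
      _ = _ := by rw [bw_BN, Matrix.transpose_smul, Matrix.transpose_one]
  exact smul_right_injective _ (by norm_num : (4 : ℤ) ≠ 0) h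

theorem bw_span_coeff (A : Matrix (Fin 16) (Fin 16) ℤ) (x : Fin 16 → ℤ)
    (h : x ∈ Submodule.span ℤ (Set.range A)) : ∃ u, u ᵥ* A = x := by
  obtain ⟨c, hc⟩ := (Submodule.mem_span_range_iff_exists_fun (v := fun i => A i) ℤ).mp h
  refine ⟨c, ?_⟩
  rw [← hc]
  ext j
  simp [Matrix.vecMul, dotProduct]

theorem bw_disc (b : Matrix (Fin 16) (Fin 16) ℤ)
    (hb : Submodule.span ℤ (Set.range b) = Submodule.span ℤ {x | memBW16 x})
    (G : Matrix (Fin 16) (Fin 16) ℤ) (hG : (2 : ℤ) • G = b * bᵀ) :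
    G.det = 2 ^ 8 ∧
      Nonempty (((Fin 16 → ℤ) ⧸ LinearMap.range G.mulVecLin) ≃+ (Fin 8 → ZMod 2)) := by
  have h1 : ∀ i, ∃ u, u ᵥ* bwB = b i := fun i => by
    apply bw_span_coeff
    have : b i ∈ Submodule.span ℤ {x | memBW16 x} := hb ▸ Submodule.subset_span ⟨i, rfl⟩
    exact (Submodule.span_le.mpr fun x hx => bw_mem_span hx) this
  have h2 : ∀ i, ∃ u, u ᵥ* b = bwB i := fun i => by
    apply bw_span_coeff
    rw [hb]
    exact Submodule.subset_span (bw_rows_mem i)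
  choose U hU using h1
  choose V hV using h2
  obtain ⟨U', hU'⟩ : ∃ U' : Matrix (Fin 16) (Fin 16) ℤ, U' = U := ⟨U, rfl⟩
  obtain ⟨V', hV'⟩ : ∃ V' : Matrix (Fin 16) (Fin 16) ℤ, V' = V := ⟨V, rfl⟩
  have hUB : U' * bwB = b := by
    ext i j; rw [← hU i, hU']; rfl
  have hVb : V' * b = bwB := by
    ext i j; rw [← hV i, hV']; rfl
  clear hU hV hU' hV' U V
  have hVU : V' * U' = 1 := by
    have h : (4 : ℤ) • (V' * U') = (4 : ℤ) • 1 := by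
      calc (4 : ℤ) • (V' * U') = V' * (U' * bwB) * bwN := by
            rw [Matrix.mul_assoc, Matrix.mul_assoc, bw_BN, Matrix.mul_smul, Matrix.mul_smul,
              Matrix.mul_one]
        _ = _ := by rw [hUB, hVb, bw_BN]
    exact smul_right_injective _ (by norm_num : (4 : ℤ) ≠ 0) h
  have hUV : U' * V' = 1 := mul_eq_one_comm.mp hVU
  have hUVt : U'ᵀ * V'ᵀ = 1 := by rw [← Matrix.transpose_mul, hVU, Matrix.transpose_one]
  have hG2 : (2 : ℤ) • G = U' * (bwB * bwBᵀ) * U'ᵀ := by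
    rw [hG, ← hUB, Matrix.transpose_mul]; simp only [Matrix.mul_assoc]
  constructor
  · have hd := congrArg Matrix.det hG2
    have hu : U'.det * V'.det = 1 := by rw [← Matrix.det_mul, hUV, Matrix.det_one]
    have hu2 : U'.det * U'.det = 1 := by
      rcases Int.isUnit_iff.mp (IsUnit.of_mul_eq_one _ hu) with h | h <;> rw [h] <;> norm_num
    simp only [Matrix.det_mul, Matrix.det_transpose, Matrix.det_smul, Fintype.card_fin,
      bw_det] at hd
    have : U'.det * (2 ^ 12 * 2 ^ 12) * U'.det = (2 ^ 24 : ℤ) := by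
      linear_combination (2 ^ 24 : ℤ) * hu2
    rw [this] at hd
    omega
  · let C : Matrix (Fin 8) (Fin 16) ℤ := bwC * V'
    let r : (Fin 8 → ℤ) →ₗ[ℤ] (Fin 8 → ZMod 2) :=
      { toFun := fun v i => (v i : ZMod 2)
        map_add' := by intro x y; ext i; simp
        map_smul' := by intro x y; ext i; simp }
    let f : (Fin 16 → ℤ) →ₗ[ℤ] (Fin 8 → ZMod 2) := r ∘ₗ C.mulVecLin
    have hfC : ∀ v t, f v t = (((bwC *ᵥ (V' *ᵥ v)) t : ℤ) : ZMod 2) := by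
      intro v t
      simp [f, r, C, Matrix.mulVec_mulVec]
    have hfz : ∀ v, f v = 0 ↔ ∃ w, bwH *ᵥ (V' *ᵥ v) = (2 : ℤ) • w := by
      intro v
      constructor
      · intro h
        have h2 : ∀ t, (2 : ℤ) ∣ (bwC *ᵥ (V' *ᵥ v)) t := by
          intro t
          have := congrFun h t
          rw [hfC, Pi.zero_apply, ZMod.intCast_zmod_eq_zero_iff_dvd] at this
          exact_mod_cast this
        have h3 : ∀ i, (2 : ℤ) ∣ (bwH *ᵥ (V' *ᵥ v)) i := by
          intro i
          have e : (bwH *ᵥ (V' *ᵥ v)) i =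
              ((bwH - bwKm * bwC) *ᵥ (V' *ᵥ v)) i + (bwKm *ᵥ (bwC *ᵥ (V' *ᵥ v))) i := by
            rw [Matrix.sub_mulVec, Matrix.mulVec_mulVec _ bwKm bwC]
            simp
          rw [e]
          refine dvd_add ?_ ?_
          · simp only [Matrix.mulVec, dotProduct]
            exact Finset.dvd_sum fun j _ => Dvd.dvd.mul_right (bw_KC i j) _
          · simp only [Matrix.mulVec, dotProduct]
            exact Finset.dvd_sum fun j _ => Dvd.dvd.mul_left (h2 j) _
        choose w hw using h3
        exact ⟨w, funext fun i => by simp [hw]⟩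
      · rintro ⟨w, hw⟩
        ext t
        rw [hfC, Pi.zero_apply, ZMod.intCast_zmod_eq_zero_iff_dvd]
        have : (bwC *ᵥ (V' *ᵥ v)) t = (bwH *ᵥ (V' *ᵥ v)) (bwSel t) := rfl
        rw [this, hw]
        exact ⟨w (bwSel t), by simp⟩
    have hker : LinearMap.range G.mulVecLin = LinearMap.ker f := by
      ext v
      rw [LinearMap.mem_ker, hfz]
      constructor
      · rintro ⟨w, rfl⟩
        refine ⟨U'ᵀ *ᵥ w, ?_⟩
        apply smul_right_injective _ (by norm_num : (2 : ℤ) ≠ 0)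
        have e : (2 : ℤ) • (bwH * (V' * G)) = (4 : ℤ) • U'ᵀ := by
          rw [← Matrix.mul_smul, ← Matrix.mul_smul, hG2]
          calc bwH * (V' * (U' * (bwB * bwBᵀ) * U'ᵀ))
              = bwH * ((V' * U') * (bwB * bwBᵀ)) * U'ᵀ := by simp only [Matrix.mul_assoc]
            _ = _ := by rw [hVU, Matrix.one_mul, bw_HBB]; simp
        simp only [Matrix.mulVecLin_apply, Matrix.mulVec_mulVec]
        rw [← Matrix.smul_mulVec, e, Matrix.smul_mulVec, smul_smul]
        norm_num
      · rintro ⟨w, hw⟩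
        refine ⟨V'ᵀ *ᵥ w, ?_⟩
        apply smul_right_injective _ (by norm_num : (4 : ℤ) ≠ 0)
        have e : (2 : ℤ) • (G * V'ᵀ) = U' * (bwB * bwBᵀ) := by
          rw [← Matrix.smul_mul, hG2, Matrix.mul_assoc, hUVt, Matrix.mul_one]
        simp only [Matrix.mulVecLin_apply, Matrix.mulVec_mulVec]
        calc (4 : ℤ) • ((G * V'ᵀ) *ᵥ w) = ((2 : ℤ) • (G * V'ᵀ)) *ᵥ ((2 : ℤ) • w) := by
              rw [Matrix.smul_mulVec, Matrix.mulVec_smul, smul_smul]; norm_num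
          _ = (U' * (bwB * bwBᵀ * bwH) * V') *ᵥ v := by
              rw [e, ← hw]; simp only [Matrix.mulVec_mulVec, Matrix.mul_assoc]
          _ = _ := by
              rw [bw_BBH]
              simp only [Matrix.mul_smul, Matrix.mul_one, Matrix.smul_mul, hUV,
                Matrix.smul_mulVec, Matrix.one_mulVec]
    have hsurj : Function.Surjective f := by
      intro y
      refine ⟨U' *ᵥ (∑ k, ((y k).val : ℤ) • Pi.single (bwIdx k) 1), ?_⟩
      ext t
      rw [hfC, Matrix.mulVec_mulVec _ V' U', hVU, Matrix.one_mulVec, Matrix.mulVec_sum,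
        Finset.sum_apply]
      simp only [Matrix.mulVec_smul, Pi.smul_apply, Matrix.mulVec_single_one, Matrix.col_apply,
        smul_eq_mul]
      push_cast
      have hc : ∀ k, ((bwC t (bwIdx k) : ℤ) : ZMod 2) = if t = k then 1 else 0 := by
        intro k
        rw [← ZMod.intCast_mod]
        have := bw_CR t k
        push_cast
        rw [this]
        split_ifs <;> simp
      simp [hc]
    exact ⟨((Submodule.quotEquivOfEq _ _ hker).trans
      (f.quotKerEquivOfSurjective hsurj)).toAddEquiv⟩

/-- The Barnes–Wall lattice `BW16` (even of rank 16, minimal norm 4,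
determinant `2^8`) is rootless and its discriminant group is `(ℤ/2ℤ)^8`, matching the
entry `DIH8(16,0)` of the classification.  (Norms are `(x ⬝ x)/2` in this model, so
norm 4 reads `x ⬝ x = 8` and a root would have `x ⬝ x = 4`.) -/
theorem BW16_properties :
    (∀ x : Fin 16 → ℤ, memBW16 x → (4 : ℤ) ∣ x ⬝ᵥ x) ∧
    (∀ x : Fin 16 → ℤ, memBW16 x → x ≠ 0 → 8 ≤ x ⬝ᵥ x) ∧
    (∃ x : Fin 16 → ℤ, memBW16 x ∧ x ⬝ᵥ x = 8) ∧
    (∀ x : Fin 16 → ℤ, memBW16 x → x ⬝ᵥ x ≠ 4) ∧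
    (∀ b : Fin 16 → (Fin 16 → ℤ), LinearIndependent ℤ b →
      Submodule.span ℤ (Set.range b) = Submodule.span ℤ {x | memBW16 x} →
      ∀ G : Matrix (Fin 16) (Fin 16) ℤ, (∀ i j, 2 * G i j = b i ⬝ᵥ b j) →
        G.det = 2 ^ 8 ∧
        Nonempty (((Fin 16 → ℤ) ⧸ LinearMap.range G.mulVecLin) ≃+ (Fin 8 → ZMod 2))) := by
  refine ⟨fun x h => (bw_norm h).1, fun x h => (bw_norm h).2, ?_, ?_, ?_⟩
  · refine ⟨fun j => if j = 14 then 2 else if j = 15 then -2 else 0, ?_, by decide +kernel⟩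
    have e : (fun j : Fin 16 => if j = 14 then (2 : ℤ) else if j = 15 then -2 else 0) = bwB 14 := by
      decide +kernel
    rw [e]
    exact bw_rows_mem 14
  · intro x h h4
    have h0 : x ≠ 0 := by
      rintro rfl
      simp at h4
    have := (bw_norm h).2 h0
    omega
  · intro b _ hspan G hG
    refine bw_disc b hspan G ?_
    ext i j
    exact hG i j
end
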